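/- Let φ : ℝ → ℝ be a C^∞ function such that φ = 1 on [−1/2, 1/2] and φ = 0 outside [−1, 1]. Then for every (y₁, y₂, y₃) ∈ ℝ × (−1/2, 1/2) × ℝ the series S(y₁,y₂,y₃) = Σ_{k=1}^{∞} φ(k·y₁)·( k!·y₁^{k−1}·y₃ − Σ_{i=1}^{k} (k!/(i−1)!)·y₁^{k−i}·y₂^{i} ) converges, and the function S so defined is C^∞ on the open set ℝ × (−1/2, 1/2) × ℝ. Consequently, the function π̃₄(y₁,y₂,y₃,y₄) = y₄ − S(y₁,y₂,y₃) is C^∞ on ℝ × (−1/2, 1/2) × ℝ². -/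

import Mathlib

open scoped Nat

noncomputable section

/-- The summand of index `k+1` (so `k+1` runs over `1, 2, …`) of the series defining the
smooth function `S` (the correction part of `π̃₄`). -/
def piTerm (phi : ℝ → ℝ) (k : ℕ) (y : ℝ × ℝ × ℝ) : ℝ :=
  phi (((k : ℝ) + 1) * y.1) *
    (((k + 1)! : ℝ) * y.1 ^ k * y.2.2 -
      ∑ i ∈ Finset.Icc 1 (k + 1),
        (((k + 1)! : ℝ) / ((i - 1)! : ℝ)) * y.1 ^ (k + 1 - i) * y.2.1 ^ i)

/-!
Put `n = k + 1`. In the variables `s = n y₁`, `t = y₂` the `n`-th summand is `φ(s)` times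
`y₃ (n! / n ^ (n - 1)) s ^ (n - 1) - ∑ (n! / ((i - 1)! n ^ (n - i))) s ^ (n - i) t ^ i`, and only
`|s| ≤ 1` matters. For `|t| ≤ c` the coefficients of the sum, weighted by `c ^ i`, add up to at most
`(n! / n ^ n) n c exp (n c)`, which by Stirling is at most `exp 1 * n ^ 2 * exp (-(1 - c) n)`.
Differentiating `j` times, and returning from `s` to `y₁`, costs only a factor polynomial in `n`.
Hence, when `c < 1`, the series of all derivatives converge uniformly after a cutoff in `t`.
-/

section DerivativeBounds

lemma norm_iteratedDeriv_pow_le {𝕜 : Type*} [RCLike 𝕜] {c : ℝ} (hc : 0 < c) {t : 𝕜}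
    (ht : ‖t‖ ≤ c) (m l : ℕ) : ‖iteratedDeriv l (· ^ m) t‖ ≤ (m / c) ^ l * c ^ m := by
  rw [iteratedDeriv_pow, norm_mul, norm_pow, RCLike.norm_natCast]
  rcases le_or_gt l m with hlm | hlm
  · calc (m.descFactorial l : ℝ) * ‖t‖ ^ (m - l) ≤ (m : ℝ) ^ l * c ^ (m - l) := by
          gcongr
          exact_mod_cast m.descFactorial_le_pow l
      _ = (m / c) ^ l * c ^ m := by
          rw [pow_sub₀ c hc.ne' hlm, div_pow]
          ring
  · rw [Nat.descFactorial_of_lt hlm, Nat.cast_zero, zero_mul]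
    positivity

lemma iteratedDeriv_eq_zero_of_support_subset {𝕜 F : Type*} [NontriviallyNormedField 𝕜]
    [NormedAddCommGroup F] [NormedSpace 𝕜 F] {f : 𝕜 → F} {s : Set 𝕜} (hs : IsClosed s)
    (hf : Function.support f ⊆ s) {t : 𝕜} (ht : t ∉ s) (j : ℕ) : iteratedDeriv j f t = 0 := by
  have hzero : iteratedFDeriv 𝕜 j f t = 0 := Function.notMem_support.1 fun h =>
    ht (closure_minimal hf hs (support_iteratedFDeriv_subset j h))
  rw [iteratedDeriv, hzero, zero_apply]

lemma exists_norm_iteratedDeriv_pow_mul_le {v : ℝ → ℝ} {j : ℕ} (hv : ContDiff ℝ j v) {c : ℝ}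
    (hc : 0 < c) (hsupp : Function.support v ⊆ Set.Icc (-c) c) :
    ∃ C, 0 ≤ C ∧ ∀ (m : ℕ) (t : ℝ),
      ‖iteratedDeriv j (fun s => s ^ m * v s) t‖ ≤ C * ((m : ℝ) + 1) ^ j * c ^ m := by
  have bounded_on_Icc : ∀ l ≤ j, ∃ D, ∀ t ∈ Set.Icc (-c) c, ‖iteratedDeriv l v t‖ ≤ D :=
    fun l hl => isCompact_Icc.exists_bound_of_continuousOn
      (hv.continuous_iteratedDeriv l (by exact_mod_cast hl)).continuousOn
  choose! D hD using bounded_on_Icc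
  have hD0 : ∀ l ≤ j, 0 ≤ D l := fun l hl =>
    (norm_nonneg _).trans (hD l hl 0 ⟨by linarith, hc.le⟩)
  have hC : 0 ≤ ∑ l ∈ Finset.range (j + 1), j.choose l * (1 / c) ^ l * D (j - l) :=
    Finset.sum_nonneg fun l _ => mul_nonneg (by positivity) (hD0 _ (j.sub_le l))
  refine ⟨_, hC, fun m t => ?_⟩
  by_cases ht : t ∈ Set.Icc (-c) c
  · rw [iteratedDeriv_fun_mul (by fun_prop) hv.contDiffAt, Finset.sum_mul, Finset.sum_mul]
    refine (norm_sum_le _ _).trans (Finset.sum_le_sum fun l hl => ?_)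
    have hlj : l ≤ j := Finset.mem_range_succ_iff.1 hl
    have hpow : ((m : ℝ) / c) ^ l ≤ (1 / c) ^ l * ((m : ℝ) + 1) ^ j := by
      calc ((m : ℝ) / c) ^ l = (1 / c) ^ l * (m : ℝ) ^ l := by ring
        _ ≤ (1 / c) ^ l * ((m : ℝ) + 1) ^ l := by gcongr; linarith
        _ ≤ (1 / c) ^ l * ((m : ℝ) + 1) ^ j := by gcongr; linarith [m.cast_nonneg (α := ℝ)]
    rw [norm_mul, norm_mul, RCLike.norm_natCast]
    calc j.choose l * ‖iteratedDeriv l (· ^ m) t‖ * ‖iteratedDeriv (j - l) v t‖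
        ≤ j.choose l * ((1 / c) ^ l * ((m : ℝ) + 1) ^ j * c ^ m) * D (j - l) := by
          gcongr
          · exact (norm_iteratedDeriv_pow_le hc (abs_le.2 ht) m l).trans (by gcongr)
          · exact hD _ (j.sub_le l) t ht
      _ = j.choose l * (1 / c) ^ l * D (j - l) * ((m : ℝ) + 1) ^ j * c ^ m := by ring
  · rw [iteratedDeriv_eq_zero_of_support_subset isClosed_Icc
      ((Function.support_mul_subset_right _ _).trans hsupp) ht, norm_zero]
    positivity

variable {𝕜 E F G : Type*} [NontriviallyNormedField 𝕜] [NormedAddCommGroup E] [NormedSpace 𝕜 E]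
  [NormedAddCommGroup F] [NormedSpace 𝕜 F] [NormedAddCommGroup G] [NormedSpace 𝕜 G]

lemma norm_iteratedFDeriv_comp_continuousLinearMap_le (L : G →L[𝕜] E) {f : E → F} {j : ℕ}
    (hf : ContDiff 𝕜 j f) (x : G) :
    ‖iteratedFDeriv 𝕜 j (fun y => f (L y)) x‖ ≤ ‖iteratedFDeriv 𝕜 j f (L x)‖ * ‖L‖ ^ j := by
  change ‖iteratedFDeriv 𝕜 j (f ∘ L) x‖ ≤ _
  rw [L.iteratedFDeriv_comp_right hf x le_rfl]
  exact (ContinuousMultilinearMap.norm_compContinuousLinearMap_le _ _).trans_eq (by simp)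

lemma norm_iteratedFDeriv_mul_fst_snd_le {f g : 𝕜 → 𝕜} {j : ℕ} (hf : ContDiff 𝕜 j f)
    (hg : ContDiff 𝕜 j g) (x : 𝕜 × 𝕜) :
    ‖iteratedFDeriv 𝕜 j (fun x : 𝕜 × 𝕜 => f x.1 * g x.2) x‖ ≤
      ∑ l ∈ Finset.range (j + 1),
        j.choose l * ‖iteratedDeriv l f x.1‖ * ‖iteratedDeriv (j - l) g x.2‖ := by
  have norm_comp_le : ∀ (L : 𝕜 × 𝕜 →L[𝕜] 𝕜), ‖L‖ ≤ 1 → ∀ {h : 𝕜 → 𝕜} {l : ℕ}, ContDiff 𝕜 l h →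
      ‖iteratedFDeriv 𝕜 l (fun x => h (L x)) x‖ ≤ ‖iteratedDeriv l h (L x)‖ := by
    intro L hL h l hh
    rw [← norm_iteratedFDeriv_eq_norm_iteratedDeriv]
    exact (norm_iteratedFDeriv_comp_continuousLinearMap_le L hh x).trans
      (mul_le_of_le_one_right (norm_nonneg _) (pow_le_one₀ (norm_nonneg _) hL))
  refine (norm_iteratedFDeriv_mul_le (hf.comp contDiff_fst) (hg.comp contDiff_snd) x le_rfl).trans
    (Finset.sum_le_sum fun l hl => ?_)
  have hlj : l ≤ j := Finset.mem_range_succ_iff.1 hl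
  gcongr
  · exact norm_comp_le (.fst 𝕜 𝕜 𝕜) (ContinuousLinearMap.norm_fst_le ..)
      (hf.of_le (by exact_mod_cast hlj))
  · exact norm_comp_le (.snd 𝕜 𝕜 𝕜) (ContinuousLinearMap.norm_snd_le ..)
      (hg.of_le (by exact_mod_cast j.sub_le l))

end DerivativeBounds

section CutoffForm

/-- The binary form `∑ i ∈ I, a i * s ^ (d - i) * t ^ i` of degree `d`, multiplied by the cutoff
`v s * w t`. Indices `i > d`, for which `d - i` truncates, are excluded where this matters. -/
def cutoffForm (v w : ℝ → ℝ) (d : ℕ) (I : Finset ℕ) (a : ℕ → ℝ) (x : ℝ × ℝ) : ℝ :=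
  ∑ i ∈ I, a i * (x.1 ^ (d - i) * v x.1 * (x.2 ^ i * w x.2))

variable {v w : ℝ → ℝ} {b c : ℝ}

lemma contDiff_cutoffForm {N : WithTop ℕ∞} (hv : ContDiff ℝ N v) (hw : ContDiff ℝ N w) (d : ℕ)
    (I : Finset ℕ) (a : ℕ → ℝ) : ContDiff ℝ N (cutoffForm v w d I a) := by
  unfold cutoffForm
  fun_prop

lemma exists_norm_iteratedFDeriv_pow_mul_pow_mul_le {j : ℕ} (hv : ContDiff ℝ j v)
    (hw : ContDiff ℝ j w) (hb : 0 < b) (hc : 0 < c) (hvb : Function.support v ⊆ Set.Icc (-b) b)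
    (hwc : Function.support w ⊆ Set.Icc (-c) c) :
    ∃ C, 0 ≤ C ∧ ∀ (m i : ℕ) (x : ℝ × ℝ),
      ‖iteratedFDeriv ℝ j (fun x : ℝ × ℝ => x.1 ^ m * v x.1 * (x.2 ^ i * w x.2)) x‖ ≤
        C * ((m + i : ℕ) + 1 : ℝ) ^ j * (b ^ m * c ^ i) := by
  have hof : ∀ {f : ℝ → ℝ}, ContDiff ℝ j f → ∀ l ≤ j, ContDiff ℝ l f := fun hf l hl =>
    hf.of_le (by exact_mod_cast hl)
  choose! A hA0 hA using fun l (hl : l ≤ j) =>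
    exists_norm_iteratedDeriv_pow_mul_le (hof hv l hl) hb hvb
  choose! B hB0 hB using fun l (hl : l ≤ j) =>
    exists_norm_iteratedDeriv_pow_mul_le (hof hw l hl) hc hwc
  have hC : 0 ≤ ∑ l ∈ Finset.range (j + 1), j.choose l * A l * B (j - l) :=
    Finset.sum_nonneg fun l hl => mul_nonneg
      (mul_nonneg (by positivity) (hA0 l (Finset.mem_range_succ_iff.1 hl))) (hB0 _ (j.sub_le l))
  refine ⟨_, hC, fun m i x => ?_⟩
  refine (norm_iteratedFDeriv_mul_fst_snd_le (f := fun s => s ^ m * v s)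
    (g := fun t => t ^ i * w t) (by fun_prop) (by fun_prop) x).trans ?_
  rw [Finset.sum_mul, Finset.sum_mul]
  refine Finset.sum_le_sum fun l hl => ?_
  have hlj : l ≤ j := Finset.mem_range_succ_iff.1 hl
  have hAl := hA0 l hlj
  have hBl := hB0 _ (j.sub_le l)
  have hm : (m : ℝ) ≤ (m + i : ℕ) := by exact_mod_cast m.le_add_right i
  have hi : (i : ℝ) ≤ (m + i : ℕ) := by exact_mod_cast i.le_add_left m
  calc j.choose l * ‖iteratedDeriv l (fun s => s ^ m * v s) x.1‖ *
        ‖iteratedDeriv (j - l) (fun t => t ^ i * w t) x.2‖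
      ≤ j.choose l * (A l * ((m + i : ℕ) + 1 : ℝ) ^ l * b ^ m) *
        (B (j - l) * ((m + i : ℕ) + 1 : ℝ) ^ (j - l) * c ^ i) := by
        gcongr
        · exact (hA l hlj m x.1).trans (by gcongr)
        · exact (hB _ (j.sub_le l) i x.2).trans (by gcongr)
    _ = j.choose l * A l * B (j - l) * ((m + i : ℕ) + 1 : ℝ) ^ j * (b ^ m * c ^ i) := by
        rw [← pow_mul_pow_sub _ hlj]
        ring

lemma exists_norm_iteratedFDeriv_cutoffForm_le {j : ℕ} (hv : ContDiff ℝ j v)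
    (hw : ContDiff ℝ j w) (hb : 0 < b) (hc : 0 < c) (hvb : Function.support v ⊆ Set.Icc (-b) b)
    (hwc : Function.support w ⊆ Set.Icc (-c) c) :
    ∃ C, 0 ≤ C ∧ ∀ (d : ℕ) (I : Finset ℕ) (a : ℕ → ℝ) (x : ℝ × ℝ), (∀ i ∈ I, i ≤ d) →
      ‖iteratedFDeriv ℝ j (cutoffForm v w d I a) x‖ ≤
        C * ((d : ℝ) + 1) ^ j * ∑ i ∈ I, |a i| * (b ^ (d - i) * c ^ i) := by
  obtain ⟨C, hC0, hC⟩ := exists_norm_iteratedFDeriv_pow_mul_pow_mul_le hv hw hb hc hvb hwc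
  refine ⟨C, hC0, fun d I a x hI => ?_⟩
  have hmonomial : ∀ i, ContDiff ℝ j
      (fun x : ℝ × ℝ => x.1 ^ (d - i) * v x.1 * (x.2 ^ i * w x.2)) := fun i => by fun_prop
  unfold cutoffForm
  rw [iteratedFDeriv_fun_sum_apply fun i _ => (contDiff_const.mul (hmonomial i)).contDiffAt,
    Finset.mul_sum]
  refine (norm_sum_le _ _).trans (Finset.sum_le_sum fun i hi => ?_)
  have hbound := hC (d - i) i x
  rw [Nat.sub_add_cancel (hI i hi)] at hbound
  calc ‖iteratedFDeriv ℝ j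
          (fun x : ℝ × ℝ => a i * (x.1 ^ (d - i) * v x.1 * (x.2 ^ i * w x.2))) x‖
      = |a i| * ‖iteratedFDeriv ℝ j
          (fun x : ℝ × ℝ => x.1 ^ (d - i) * v x.1 * (x.2 ^ i * w x.2)) x‖ := by
        simp_rw [← smul_eq_mul (a i)]
        rw [iteratedFDeriv_const_smul_apply' (hmonomial i).contDiffAt, norm_smul,
          Real.norm_eq_abs]
    _ ≤ |a i| * (C * ((d : ℝ) + 1) ^ j * (b ^ (d - i) * c ^ i)) := by gcongr
    _ = C * ((d : ℝ) + 1) ^ j * (|a i| * (b ^ (d - i) * c ^ i)) := by ring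

end CutoffForm

section Series

lemma summable_and_contDiff_tsum_of_norm_iteratedFDeriv_le {E F : Type*} [NormedAddCommGroup E]
    [NormedSpace ℝ E] [NormedAddCommGroup F] [NormedSpace ℝ F] [CompleteSpace F] {N : ℕ∞}
    {f : ℕ → E → F} (hf : ∀ k, ContDiff ℝ N (f k)) {ε : ℝ} (hε : 0 < ε)
    (hbound : ∀ j : ℕ, (j : ℕ∞) ≤ N → ∃ (C : ℝ) (p : ℕ), ∀ k y,
      ‖iteratedFDeriv ℝ j (f k) y‖ ≤ C * (((k : ℝ) + 1) ^ p * Real.exp (-ε * ((k : ℝ) + 1)))) :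
    (∀ y, Summable fun k => f k y) ∧ ContDiff ℝ N fun y => ∑' k, f k y := by
  choose! C p hCp using hbound
  have hsummable (j : ℕ) : Summable fun k : ℕ =>
      C j * (((k : ℝ) + 1) ^ p j * Real.exp (-ε * ((k : ℝ) + 1))) := by
    have := (summable_nat_add_iff 1).2 (Real.summable_pow_mul_exp_neg_nat_mul (p j) hε)
    exact_mod_cast this.mul_left (C j)
  refine ⟨fun y => .of_norm_bounded (hsummable 0) fun k => ?_,
    contDiff_tsum hf (fun j _ => hsummable j) fun j k y hj => hCp j hj k y⟩
  simpa only [norm_iteratedFDeriv_zero] using hCp 0 (by simp) k y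

/-- The linear map `(y₁, y₂, y₃) ↦ (n y₁, y₂)`: in its target coordinates the cutoff `φ (n y₁)`
no longer depends on `n`. -/
def rescale (n : ℝ) : ℝ × ℝ × ℝ →L[ℝ] ℝ × ℝ :=
  (n • ContinuousLinearMap.fst ℝ ℝ (ℝ × ℝ)).prod
    ((ContinuousLinearMap.fst ℝ ℝ ℝ).comp (ContinuousLinearMap.snd ℝ ℝ (ℝ × ℝ)))

lemma rescale_apply (n : ℝ) (y : ℝ × ℝ × ℝ) : rescale n y = (n * y.1, y.2.1) := rfl

lemma norm_rescale_le {n : ℝ} (hn : 1 ≤ n) : ‖rescale n‖ ≤ n := by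
  refine ContinuousLinearMap.opNorm_le_bound _ (by linarith) fun y => ?_
  have hy1 : ‖y.1‖ ≤ ‖y‖ := norm_fst_le y
  have hy2 : ‖y.2.1‖ ≤ ‖y‖ := (norm_fst_le y.2).trans (norm_snd_le y)
  rw [rescale_apply, Prod.norm_def]
  refine max_le ?_ (hy2.trans (le_mul_of_one_le_left (norm_nonneg y) hn))
  rw [norm_mul, Real.norm_of_nonneg (by linarith)]
  gcongr

lemma summable_and_contDiff_tsum_cutoffForm {v w : ℝ → ℝ} {N : ℕ∞} (hv : ContDiff ℝ N v)
    (hw : ContDiff ℝ N w) {b c : ℝ} (hb : 0 < b) (hc : 0 < c)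
    (hvb : Function.support v ⊆ Set.Icc (-b) b) (hwc : Function.support w ⊆ Set.Icc (-c) c)
    {d : ℕ → ℕ} {I : ℕ → Finset ℕ} {a : ℕ → ℕ → ℝ} (hd : ∀ k, d k ≤ k + 1)
    (hI : ∀ k, ∀ i ∈ I k, i ≤ d k) {K ε : ℝ} {p : ℕ} (hε : 0 < ε)
    (ha : ∀ k, ∑ i ∈ I k, |a k i| * (b ^ (d k - i) * c ^ i) ≤
      K * (((k : ℝ) + 1) ^ p * Real.exp (-ε * ((k : ℝ) + 1)))) :
    (∀ y, Summable fun k : ℕ => cutoffForm v w (d k) (I k) (a k) (rescale (k + 1) y)) ∧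
      ContDiff ℝ N fun y => ∑' k : ℕ, cutoffForm v w (d k) (I k) (a k) (rescale (k + 1) y) := by
  refine summable_and_contDiff_tsum_of_norm_iteratedFDeriv_le
    (fun k => (contDiff_cutoffForm hv hw _ _ _).comp (rescale _).contDiff) hε fun j hj => ?_
  have hvj : ContDiff ℝ j v := hv.of_le (by exact_mod_cast hj)
  have hwj : ContDiff ℝ j w := hw.of_le (by exact_mod_cast hj)
  obtain ⟨C, hC0, hC⟩ := exists_norm_iteratedFDeriv_cutoffForm_le hvj hwj hb hc hvb hwc
  refine ⟨C * 2 ^ j * K, j + j + p, fun k y => ?_⟩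
  have hk : (1 : ℝ) ≤ k + 1 := by linarith [k.cast_nonneg (α := ℝ)]
  have hdk : (d k : ℝ) + 1 ≤ 2 * (k + 1) := by
    have : (d k : ℝ) ≤ k + 1 := by exact_mod_cast hd k
    linarith
  calc ‖iteratedFDeriv ℝ j
          (fun y => cutoffForm v w (d k) (I k) (a k) (rescale (k + 1) y)) y‖
      ≤ ‖iteratedFDeriv ℝ j (cutoffForm v w (d k) (I k) (a k)) (rescale (k + 1) y)‖ *
        ‖rescale (k + 1)‖ ^ j :=
        norm_iteratedFDeriv_comp_continuousLinearMap_le _ (contDiff_cutoffForm hvj hwj _ _ _) y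
    _ ≤ C * ((d k : ℝ) + 1) ^ j * (∑ i ∈ I k, |a k i| * (b ^ (d k - i) * c ^ i)) *
        ((k : ℝ) + 1) ^ j := by
        gcongr
        · exact hC _ _ _ _ (hI k)
        · exact norm_rescale_le hk
    _ ≤ C * (2 * (k + 1)) ^ j * (K * (((k : ℝ) + 1) ^ p * Real.exp (-ε * ((k : ℝ) + 1)))) *
        ((k : ℝ) + 1) ^ j := by
        gcongr
        exact ha k
    _ = C * 2 ^ j * K * (((k : ℝ) + 1) ^ (j + j + p) * Real.exp (-ε * ((k : ℝ) + 1))) := by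
        rw [mul_pow]
        ring

end Series

section Coefficients

lemma factorial_div_pow_self_le {n : ℕ} (hn : n ≠ 0) :
    (n ! : ℝ) / (n : ℝ) ^ n ≤ Real.exp 1 * n * Real.exp (-n) := by
  obtain ⟨k, rfl⟩ := Nat.exists_eq_succ_of_ne_zero hn
  have hanti : Stirling.stirlingSeq (k + 1) ≤ Real.exp 1 / √2 :=
    Stirling.stirlingSeq_one ▸ Stirling.stirlingSeq'_antitone k.zero_le
  set n := k + 1
  have hn1 : (1 : ℝ) ≤ n := by exact_mod_cast Nat.one_le_iff_ne_zero.2 hn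
  have hsqrt : √(n : ℝ) ≤ n := Real.sqrt_le_self_iff.2 (.inr hn1)
  have hpos : 0 < √(2 * n : ℝ) * (n / Real.exp 1) ^ n := by positivity
  rw [Stirling.stirlingSeq, div_le_iff₀ hpos] at hanti
  rw [div_le_iff₀ (by positivity)]
  calc (n ! : ℝ) ≤ Real.exp 1 / √2 * (√(2 * n : ℝ) * (n / Real.exp 1) ^ n) := hanti
    _ = Real.exp 1 * √(n : ℝ) * Real.exp (-n) * (n : ℝ) ^ n := by
        rw [Real.sqrt_mul zero_le_two, div_pow, ← Real.exp_nat_mul, mul_one, Real.exp_neg]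
        field_simp
    _ ≤ Real.exp 1 * n * Real.exp (-n) * (n : ℝ) ^ n := by gcongr

/-- The coefficient of `y₃ s ^ (n - 1)` in the `n`-th summand, where `s = n y₁`. -/
def linearCoeff (n : ℕ) : ℝ := (n ! : ℝ) / (n : ℝ) ^ (n - 1)

/-- Minus the coefficient of `s ^ (n - i) t ^ i` in the `n`-th summand, for `1 ≤ i ≤ n`, where
`s = n y₁` and `t = y₂`. -/
def monomialCoeff (n i : ℕ) : ℝ := (n ! : ℝ) / (i - 1)! / (n : ℝ) ^ (n - i)

lemma linearCoeff_nonneg (n : ℕ) : 0 ≤ linearCoeff n := by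
  unfold linearCoeff
  positivity

lemma monomialCoeff_nonneg (n i : ℕ) : 0 ≤ monomialCoeff n i := by
  unfold monomialCoeff
  positivity

lemma linearCoeff_le {n : ℕ} (hn : n ≠ 0) :
    linearCoeff n ≤ Real.exp 1 * ((n : ℝ) ^ 2 * Real.exp (-n)) := by
  calc linearCoeff n = n * ((n ! : ℝ) / (n : ℝ) ^ n) := by
        rw [linearCoeff, ← pow_sub_one_mul hn]
        field_simp
    _ ≤ n * (Real.exp 1 * n * Real.exp (-n)) := by
        gcongr
        exact factorial_div_pow_self_le hn
    _ = Real.exp 1 * ((n : ℝ) ^ 2 * Real.exp (-n)) := by ring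

lemma sum_monomialCoeff_mul_pow_eq (n : ℕ) (c : ℝ) :
    ∑ i ∈ Finset.Icc 1 n, monomialCoeff n i * c ^ i =
      (n ! : ℝ) / (n : ℝ) ^ n * (n * c) * ∑ i ∈ Finset.range n, (n * c) ^ i / (i ! : ℝ) := by
  rw [← Finset.Ico_add_one_right_eq_Icc, Finset.sum_Ico_eq_sum_range, Nat.add_sub_cancel,
    Finset.mul_sum]
  refine Finset.sum_congr rfl fun i hi => ?_
  have hin : 1 + i ≤ n := by grind
  have hn : n ≠ 0 := by lia
  rw [monomialCoeff, Nat.add_sub_cancel_left, ← pow_sub_mul_pow _ hin]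
  field_simp
  ring

lemma sum_monomialCoeff_mul_pow_le {n : ℕ} (hn : n ≠ 0) {c : ℝ} (hc0 : 0 ≤ c) (hc1 : c ≤ 1) :
    ∑ i ∈ Finset.Icc 1 n, monomialCoeff n i * c ^ i ≤
      Real.exp 1 * ((n : ℝ) ^ 2 * Real.exp (-(1 - c) * n)) := by
  rw [sum_monomialCoeff_mul_pow_eq]
  calc (n ! : ℝ) / (n : ℝ) ^ n * (n * c) * ∑ i ∈ Finset.range n, (n * c) ^ i / (i ! : ℝ)
      ≤ Real.exp 1 * n * Real.exp (-n) * (n * 1) * Real.exp (n * c) := by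
        gcongr
        · exact factorial_div_pow_self_le hn
        · exact Real.sum_le_exp_of_nonneg (by positivity) n
    _ = Real.exp 1 * ((n : ℝ) ^ 2 * (Real.exp (-n) * Real.exp (n * c))) := by ring
    _ = Real.exp 1 * ((n : ℝ) ^ 2 * Real.exp (-(1 - c) * n)) := by
        rw [← Real.exp_add]
        ring_nf

end Coefficients

section PiTerm

lemma exists_contDiff_eq_one_of_abs_le {r c : ℝ} (hr : 0 < r) (hrc : r < c) :
    ∃ w : ℝ → ℝ, (∀ N : ℕ∞, ContDiff ℝ N w) ∧ (∀ t, |t| ≤ r → w t = 1) ∧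
      Function.support w ⊆ Set.Icc (-c) c := by
  let w : ContDiffBump (0 : ℝ) := ⟨r, c, hr, hrc⟩
  refine ⟨w, fun N => w.contDiff, fun t ht => w.one_of_mem_closedBall ?_, ?_⟩
  · simpa using ht
  · rw [w.support_eq, Real.ball_eq_Ioo, zero_sub, zero_add]
    exact Set.Ioo_subset_Icc_self

lemma piTerm_eq_cutoffForm (phi : ℝ → ℝ) {w : ℝ → ℝ} {y : ℝ × ℝ × ℝ} (hw : w y.2.1 = 1)
    (k : ℕ) :
    piTerm phi k y =
      y.2.2 * cutoffForm phi w k {0} (fun _ => linearCoeff (k + 1)) (rescale (k + 1) y) -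
        cutoffForm phi w (k + 1) (Finset.Icc 1 (k + 1)) (monomialCoeff (k + 1))
          (rescale (k + 1) y) := by
  simp only [piTerm, cutoffForm, linearCoeff, monomialCoeff, rescale_apply, hw,
    Finset.sum_singleton, mul_pow, Nat.add_sub_cancel, Nat.sub_zero, pow_zero, mul_one,
    Nat.cast_add_one]
  rw [mul_sub, Finset.mul_sum]
  congr 1
  · field_simp
  · refine Finset.sum_congr rfl fun i _ => ?_
    field_simp

variable {phi w : ℝ → ℝ} {N : ℕ∞} {c : ℝ}

lemma summable_and_contDiff_tsum_linearCoeff (hphi : ContDiff ℝ N phi)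
    (hsupp : Function.support phi ⊆ Set.Icc (-1) 1) (hw : ContDiff ℝ N w) (hc : 0 < c)
    (hwc : Function.support w ⊆ Set.Icc (-c) c) :
    (∀ y, Summable fun k : ℕ =>
        cutoffForm phi w k {0} (fun _ => linearCoeff (k + 1)) (rescale (k + 1) y)) ∧
      ContDiff ℝ N fun y => ∑' k : ℕ,
        cutoffForm phi w k {0} (fun _ => linearCoeff (k + 1)) (rescale (k + 1) y) := by
  refine summable_and_contDiff_tsum_cutoffForm hphi hw one_pos hc hsupp hwc (K := Real.exp 1)
    (p := 2) (fun k => k.le_succ) (by simp) one_pos fun k => ?_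
  rw [Finset.sum_singleton, abs_of_nonneg (linearCoeff_nonneg _)]
  simpa using linearCoeff_le k.succ_ne_zero

lemma summable_and_contDiff_tsum_monomialCoeff (hphi : ContDiff ℝ N phi)
    (hsupp : Function.support phi ⊆ Set.Icc (-1) 1) (hw : ContDiff ℝ N w) (hc0 : 0 < c)
    (hc1 : c < 1) (hwc : Function.support w ⊆ Set.Icc (-c) c) :
    (∀ y, Summable fun k : ℕ => cutoffForm phi w (k + 1) (Finset.Icc 1 (k + 1))
        (monomialCoeff (k + 1)) (rescale (k + 1) y)) ∧
      ContDiff ℝ N fun y => ∑' k : ℕ, cutoffForm phi w (k + 1) (Finset.Icc 1 (k + 1))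
        (monomialCoeff (k + 1)) (rescale (k + 1) y) := by
  refine summable_and_contDiff_tsum_cutoffForm hphi hw one_pos hc0 hsupp hwc (K := Real.exp 1)
    (p := 2) (fun k => le_rfl) (fun k i hi => (Finset.mem_Icc.1 hi).2) (sub_pos.2 hc1) fun k => ?_
  simp_rw [one_pow, one_mul, abs_of_nonneg (monomialCoeff_nonneg _ _)]
  exact_mod_cast sum_monomialCoeff_mul_pow_le k.succ_ne_zero hc0.le hc1.le

lemma summable_and_contDiffOn_tsum_piTerm (hphi : ContDiff ℝ N phi)
    (hsupp : Function.support phi ⊆ Set.Icc (-1) 1) {r : ℝ} (hr0 : 0 < r) (hr1 : r < 1) :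
    (∀ y : ℝ × ℝ × ℝ, |y.2.1| < r → Summable fun k => piTerm phi k y) ∧
      ContDiffOn ℝ N (fun y => ∑' k, piTerm phi k y) {y | |y.2.1| < r} := by
  obtain ⟨c, hrc, hc1⟩ := exists_between hr1
  have hc0 : 0 < c := hr0.trans hrc
  obtain ⟨w, hw, hw1, hwc⟩ := exists_contDiff_eq_one_of_abs_le hr0 hrc
  obtain ⟨hsum_linear, hsmooth_linear⟩ :=
    summable_and_contDiff_tsum_linearCoeff hphi hsupp (hw N) hc0 hwc
  obtain ⟨hsum_monomial, hsmooth_monomial⟩ :=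
    summable_and_contDiff_tsum_monomialCoeff hphi hsupp (hw N) hc0 hc1 hwc
  have hterm {y : ℝ × ℝ × ℝ} (hy : |y.2.1| < r) :=
    piTerm_eq_cutoffForm phi (hw1 _ hy.le)
  refine ⟨fun y hy => ?_, ?_⟩
  · simpa only [hterm hy] using ((hsum_linear y).mul_left y.2.2).sub (hsum_monomial y)
  · refine ((contDiff_snd.snd.mul hsmooth_linear).sub hsmooth_monomial).contDiffOn.congr
      fun y hy => ?_
    rw [tsum_congr (hterm hy), ((hsum_linear y).mul_left _).tsum_sub (hsum_monomial y),
      tsum_mul_left]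

theorem pi4_smooth_general (hphi : ContDiff ℝ N phi)
    (hsupp : Function.support phi ⊆ Set.Icc (-1) 1) :
    (∀ y : ℝ × ℝ × ℝ, |y.2.1| < 1 → Summable fun k => piTerm phi k y) ∧
    ContDiffOn ℝ N (fun y => ∑' k, piTerm phi k y) {y : ℝ × ℝ × ℝ | |y.2.1| < 1} ∧
    ContDiffOn ℝ N
      (fun z : ℝ × ℝ × ℝ × ℝ => z.2.2.2 - ∑' k, piTerm phi k (z.1, z.2.1, z.2.2.1))
      {z : ℝ × ℝ × ℝ × ℝ | |z.2.1| < 1} := by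
  have exists_radius : ∀ t : ℝ, |t| < 1 → ∃ r, 0 < r ∧ |t| < r ∧ r < 1 := fun t ht =>
    (exists_between ht).imp fun r hr => ⟨(abs_nonneg t).trans_lt hr.1, hr⟩
  have hS : ContDiffOn ℝ N (fun y => ∑' k, piTerm phi k y) {y : ℝ × ℝ × ℝ | |y.2.1| < 1} := by
    intro y hy
    obtain ⟨r, hr0, hyr, hr1⟩ := exists_radius _ hy
    have hopen : IsOpen {y : ℝ × ℝ × ℝ | |y.2.1| < r} :=
      isOpen_lt (by fun_prop) continuous_const
    exact ((summable_and_contDiffOn_tsum_piTerm hphi hsupp hr0 hr1).2.contDiffAt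
      (hopen.mem_nhds hyr)).contDiffWithinAt
  refine ⟨fun y hy => ?_, hS, ?_⟩
  · obtain ⟨r, hr0, hyr, hr1⟩ := exists_radius _ hy
    exact (summable_and_contDiffOn_tsum_piTerm hphi hsupp hr0 hr1).1 y hyr
  · have hproj : ContDiff ℝ N fun z : ℝ × ℝ × ℝ × ℝ => (z.1, z.2.1, z.2.2.1) := by fun_prop
    exact contDiff_snd.snd.snd.contDiffOn.sub (hS.comp hproj.contDiffOn fun z hz => hz)

end PiTerm

/-- Let `phi` be `C^∞`, `phi = 1` on `[−1/2, 1/2]` and `phi = 0` outside `[−1, 1]`.  Then the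
series `S(y) = Σ_{k=1}^∞ phi(k y₁)(k! y₁^{k−1} y₃ − Σ_{i=1}^k (k!/(i−1)!) y₁^{k−i} y₂^i)`
converges for `|y₂| < 1/2`, the function `S` is `C^∞` there, and consequently
`π̃₄(y) = y₄ − S(y₁,y₂,y₃)` is `C^∞` on `ℝ × (−1/2, 1/2) × ℝ²`. -/
theorem pi4_smooth (phi : ℝ → ℝ) (hphi : ContDiff ℝ (⊤ : ℕ∞) phi)
    (hphi1 : ∀ t ∈ Set.Icc (-(1 / 2) : ℝ) (1 / 2), phi t = 1)
    (hphi0 : ∀ t : ℝ, t ∉ Set.Icc (-1 : ℝ) 1 → phi t = 0) :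
    (∀ y : ℝ × ℝ × ℝ, |y.2.1| < 1 / 2 → Summable (fun k : ℕ => piTerm phi k y)) ∧
    ContDiffOn ℝ (⊤ : ℕ∞) (fun y => ∑' k : ℕ, piTerm phi k y)
      {y : ℝ × ℝ × ℝ | |y.2.1| < 1 / 2} ∧
    ContDiffOn ℝ (⊤ : ℕ∞)
      (fun z : ℝ × ℝ × ℝ × ℝ => z.2.2.2 - ∑' k : ℕ, piTerm phi k (z.1, z.2.1, z.2.2.1))
      {z : ℝ × ℝ × ℝ × ℝ | |z.2.1| < 1 / 2} := by
  obtain ⟨hsum, hS, hpi4⟩ := pi4_smooth_general hphi (Function.support_subset_iff'.2 hphi0)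
  have hhalf : ∀ {t : ℝ}, |t| < 1 / 2 → |t| < 1 := fun ht => ht.trans one_half_lt_one
  exact ⟨fun y hy => hsum y (hhalf hy), hS.mono fun _ => hhalf, hpi4.mono fun _ => hhalf⟩
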